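/- Let n ≥ 3 and let k be an integer with k ≥ 2⌈log_3(n/4)⌉ + 4. Then the regular palm S_n(k) satisfies χ_L(S_n(k)) = ⌈log_3(n/4)⌉ + 3. -/

import Mathlib

open SimpleGraph

/-- Distance from a vertex to a set of vertices, `d(u,S) = min {d(u,v) : v ∈ S}`. -/
noncomputable def distToSet {V : Type*} (G : SimpleGraph V) (u : V) (S : Set V) : ℕ :=
  sInf (G.dist u '' S)

/-- `c` is a locating coloring of `G` with `k` colors: a proper coloring such that any two
distinct vertices are resolved by some color class. -/
def IsLocatingColoring {V : Type*} (G : SimpleGraph V) {k : ℕ} (c : V → Fin k) : Prop :=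
  (∀ u v : V, G.Adj u v → c u ≠ c v) ∧
  ∀ u v : V, u ≠ v →
    ∃ i : Fin k, distToSet G u (c ⁻¹' {i}) ≠ distToSet G v (c ⁻¹' {i})

/-- The locating chromatic number `χ_L(G)`: the least `k` admitting a locating `k`-coloring. -/
noncomputable def locatingChromaticNumber {V : Type*} (G : SimpleGraph V) : ℕ :=
  sInf {k : ℕ | ∃ c : V → Fin k, IsLocatingColoring G c}

/-- The vertex set of the palm `S_n(a_1, …, a_n)`: a hub `none` and, for each leg
`i : Fin n` (representing leg `i+1`), vertices `j : Fin (a (i+1))`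
(vertex `some ⟨i, j⟩` represents `a_{i+1, j+1}`). -/
def PalmVert (n : ℕ) (a : ℕ → ℕ) : Type :=
  Option ((i : Fin n) × Fin (a ((i : ℕ) + 1)))

/-- The palm `S_n(a_1, …, a_n)`: the star `K_{1,n}` whose `i`-th edge has been subdivided
`a_i - 1` times; the hub is joined to the first vertex of each leg, and consecutive
vertices along a leg are adjacent. -/
def Palm (n : ℕ) (a : ℕ → ℕ) : SimpleGraph (PalmVert n a) :=
  SimpleGraph.fromRel fun u v =>
    match u, v with
    | none, some ⟨_, j⟩ => (j : ℕ) = 0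
    | some ⟨i, j⟩, some ⟨i', j'⟩ => (i : ℕ) = (i' : ℕ) ∧ (j' : ℕ) = (j : ℕ) + 1
    | _, _ => False

/-!
Lower bound: in a locating coloring with `q` colors, let `A` be the set of colors of the neighbors
of the hub. Two neighbors with the same color can only be resolved by the other colors. Such a
neighbor is at distance `1` from the color of the hub, at distance `1` or `2` from the other colors
in `A`, and at one of three distances from each remaining color. Hence
`n ≤ |A| * 2 ^ (|A| - 1) * 3 ^ (q - 1 - |A|) ≤ 4 * 3 ^ (q - 3)`, the worst cases being `|A| = 2`
and `|A| = 3`.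

Upper bound: for `n ≤ 4 * 3 ^ m`, color each leg by an alternation of two of three background
colors (four choices, as the first one differs from the color of the hub), and put each of `m`
extra colors `x` at height `2 * x + 3`, at height `2 * x + 4`, or nowhere on the leg (`3 ^ m`
choices). The legs get distinct pairs of choices. The background color missing from the leg of a
vertex tells its height, the parities of the distances to the other two tell the background, and
then the distances to the extra colors tell where these are on the leg.
-/

section DistToSet

variable {V : Type*} {G : SimpleGraph V} {S : Set V}

theorem distToSet_le_dist (u : V) {v : V} (hv : v ∈ S) : distToSet G u S ≤ G.dist u v :=
  Nat.sInf_le ⟨v, hv, rfl⟩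

theorem exists_dist_eq_distToSet (hS : S.Nonempty) (u : V) :
    ∃ v ∈ S, G.dist u v = distToSet G u S :=
  Nat.sInf_mem (hS.image (G.dist u))

theorem distToSet_eq_zero_iff (hG : G.Connected) (hS : S.Nonempty) {u : V} :
    distToSet G u S = 0 ↔ u ∈ S := by
  constructor
  · intro h
    obtain ⟨v, hv, hd⟩ := exists_dist_eq_distToSet (G := G) hS u
    rwa [hG.dist_eq_zero_iff.1 (hd.trans h)]
  · intro hu
    simpa using distToSet_le_dist (G := G) u hu

theorem distToSet_le_dist_add_distToSet (hG : G.Connected) (u v : V) (S : Set V) :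
    distToSet G u S ≤ G.dist u v + distToSet G v S := by
  rcases S.eq_empty_or_nonempty with rfl | hS
  · simp [distToSet]
  · obtain ⟨w, hw, hd⟩ := exists_dist_eq_distToSet (G := G) hS v
    rw [← hd]
    exact (distToSet_le_dist u hw).trans hG.dist_triangle

theorem sub_le_dist_of_forall_adj (hG : G.Connected) {φ : V → ℤ}
    (hφ : ∀ u v, G.Adj u v → φ v ≤ φ u + 1) (u v : V) : φ v - φ u ≤ G.dist u v := by
  have walk_le : ∀ {u v : V} (p : G.Walk u v), φ v - φ u ≤ p.length := by
    intro u v p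
    induction p with
    | nil => simp
    | cons h p ih =>
      have := hφ _ _ h
      rw [Walk.length_cons]
      omega
  obtain ⟨p, hp⟩ := hG.exists_walk_length_eq_dist u v
  exact hp ▸ walk_le p

end DistToSet

theorem isLocatingColoring_equiv_comp {V α : Type*} {G : SimpleGraph V} {q : ℕ} (e : α ≃ Fin q)
    {c : V → α} (hproper : ∀ u v, G.Adj u v → c u ≠ c v)
    (hresolve : ∀ u v, (∀ x, distToSet G u (c ⁻¹' {x}) = distToSet G v (c ⁻¹' {x})) → u = v) :
    IsLocatingColoring G (e ∘ c) := by
  refine ⟨fun u v huv h => hproper u v huv (e.injective h), fun u v huv => ?_⟩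
  by_contra! h
  refine huv (hresolve u v fun x => ?_)
  have hclass : (e ∘ c) ⁻¹' {e x} = c ⁻¹' {x} := by
    ext w
    simp
  simpa only [hclass] using h (e x)

section DegreeBound

variable {V : Type*} {G : SimpleGraph V} {q : ℕ} {c : V → Fin q} {u : V} {s : Finset V}

open Classical in
/-- The possible distances to the color class `x` from a neighbor of `u` that has color `a`, when
`A` is the set of colors of the neighbors of `u` under consideration. -/
noncomputable def neighborDists (G : SimpleGraph V) (c : V → Fin q) (u : V) (A : Finset (Fin q))
    (a x : Fin q) : Finset ℕ :=
  if x = a then {0}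
  else if x = c u then {1}
  else if x ∈ A then {1, 2}
  else Finset.Icc (distToSet G u (c ⁻¹' {x}) - 1) (distToSet G u (c ⁻¹' {x}) + 1)

theorem distToSet_mem_neighborDists (hG : G.Connected) (hproper : ∀ u v, G.Adj u v → c u ≠ c v)
    (hs : ∀ v ∈ s, G.Adj u v) {v : V} (hv : v ∈ s) (x : Fin q) :
    distToSet G v (c ⁻¹' {x}) ∈ neighborDists G c u (s.image c) (c v) x := by
  have huv : G.dist u v = 1 := dist_eq_one_iff_adj.2 (hs v hv)
  have hvu : G.dist v u = 1 := dist_comm.trans huv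
  have hpos : ∀ {w : V}, c w ≠ c v → distToSet G v (c ⁻¹' {c w}) ≠ 0 := fun {w} hw h =>
    hw (Eq.symm ((distToSet_eq_zero_iff (S := c ⁻¹' {c w}) hG ⟨w, rfl⟩).1 h))
  unfold neighborDists
  split_ifs with hxv hxu hxs
  · subst hxv
    exact Finset.mem_singleton.2 ((distToSet_eq_zero_iff (S := c ⁻¹' {c v}) hG ⟨v, rfl⟩).2 rfl)
  · subst hxu
    have hle := distToSet_le_dist (G := G) v (S := c ⁻¹' {c u}) (v := u) rfl
    have := hpos (hproper u v (hs v hv))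
    rw [Finset.mem_singleton]
    omega
  · obtain ⟨w, hw, rfl⟩ := Finset.mem_image.1 hxs
    have huw : G.dist u w = 1 := dist_eq_one_iff_adj.2 (hs w hw)
    have hle : distToSet G v (c ⁻¹' {c w}) ≤ G.dist v u + G.dist u w :=
      (distToSet_le_dist v (S := c ⁻¹' {c w}) rfl).trans hG.dist_triangle
    have := hpos hxv
    rw [Finset.mem_insert, Finset.mem_singleton]
    omega
  · have hle := distToSet_le_dist_add_distToSet hG v u (c ⁻¹' {x})
    have hge := distToSet_le_dist_add_distToSet hG u v (c ⁻¹' {x})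
    rw [Finset.mem_Icc]
    omega

theorem card_piFinset_neighborDists_le {A : Finset (Fin q)} {a : Fin q} (ha : a ∈ A) :
    (Fintype.piFinset (neighborDists G c u A a)).card ≤
      2 ^ (A.card - 1) * 3 ^ (insert (c u) A)ᶜ.card := by
  have hle : ∀ x, (neighborDists G c u A a x).card ≤
      (if x ∈ A.erase a then 2 else 1) * (if x ∈ (insert (c u) A)ᶜ then 3 else 1) := by
    intro x
    unfold neighborDists
    split_ifs <;> simp_all
    omega
  calc (Fintype.piFinset (neighborDists G c u A a)).card
      ≤ ∏ x, (if x ∈ A.erase a then 2 else 1) * (if x ∈ (insert (c u) A)ᶜ then 3 else 1) := by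
        rw [Fintype.card_piFinset]
        exact Finset.prod_le_prod' fun x _ => hle x
    _ = 2 ^ (A.card - 1) * 3 ^ (insert (c u) A)ᶜ.card := by
        rw [Finset.prod_mul_distrib, Finset.prod_ite_mem, Finset.prod_ite_mem, Finset.univ_inter,
          Finset.univ_inter, Finset.prod_const, Finset.prod_const, Finset.card_erase_of_mem ha]

theorem card_le_of_isLocatingColoring (hG : G.Connected) (hc : IsLocatingColoring G c)
    (hs : ∀ v ∈ s, G.Adj u v) :
    s.card ≤ (s.image c).card *
      (2 ^ ((s.image c).card - 1) * 3 ^ (insert (c u) (s.image c))ᶜ.card) := by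
  classical
  let δ : V → Fin q → ℕ := fun v x => distToSet G v (c ⁻¹' {x})
  have hδ : δ.Injective := fun v w h => by
    by_contra hvw
    obtain ⟨x, hx⟩ := hc.2 v w hvw
    exact hx (congrFun h x)
  calc s.card = (s.image δ).card := (Finset.card_image_of_injective _ hδ).symm
    _ ≤ ((s.image c).biUnion fun a =>
          Fintype.piFinset (neighborDists G c u (s.image c) a)).card := by
        refine Finset.card_le_card (Finset.image_subset_iff.2 fun v hv => Finset.mem_biUnion.2
          ⟨c v, Finset.mem_image_of_mem c hv, Fintype.mem_piFinset.2 fun x => ?_⟩)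
        exact distToSet_mem_neighborDists hG hc.1 hs hv x
    _ ≤ _ := Finset.card_biUnion_le_card_mul _ _ _ fun a ha => card_piFinset_neighborDists_le ha

theorem three_mul_succ_mul_two_pow_le (p : ℕ) : 3 * ((p + 1) * 2 ^ p) ≤ 4 * 3 ^ p := by
  rcases p with _ | p
  · norm_num
  · induction p with
    | zero => norm_num
    | succ p ih =>
      calc 3 * ((p + 1 + 1 + 1) * 2 ^ (p + 1 + 1))
          = 3 * ((2 * p + 6) * 2 ^ (p + 1)) := by ring
        _ ≤ 3 * ((3 * p + 6) * 2 ^ (p + 1)) := by gcongr; norm_num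
        _ = 3 * (3 * ((p + 1 + 1) * 2 ^ (p + 1))) := by ring
        _ ≤ 3 * (4 * 3 ^ (p + 1)) := by gcongr
        _ = 4 * 3 ^ (p + 1 + 1) := by ring

/-- Multiplying by `27 = 3 ^ 3` avoids the exponent `q - 3`. -/
theorem card_neighbors_le_of_isLocatingColoring (hG : G.Connected) (hc : IsLocatingColoring G c)
    (hs : ∀ v ∈ s, G.Adj u v) : 27 * s.card ≤ 4 * 3 ^ q := by
  rcases s.eq_empty_or_nonempty with rfl | hne
  · simp
  have hu : c u ∉ s.image c := by
    rw [Finset.mem_image]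
    rintro ⟨v, hv, h⟩
    exact hc.1 u v (hs v hv) h.symm
  have hle := card_le_of_isLocatingColoring hG hc hs
  have hq := Finset.card_add_card_compl (insert (c u) (s.image c))
  rw [Finset.card_insert_of_notMem hu, Fintype.card_fin] at hq
  obtain ⟨p, hp⟩ := Nat.exists_eq_add_one.2 (Finset.card_pos.2 (hne.image c))
  set r := (insert (c u) (s.image c))ᶜ.card
  rw [hp, Nat.add_sub_cancel] at hle
  calc 27 * s.card ≤ 27 * ((p + 1) * (2 ^ p * 3 ^ r)) := by gcongr
    _ = 3 * ((p + 1) * 2 ^ p) * 3 ^ (r + 2) := by ring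
    _ ≤ 4 * 3 ^ p * 3 ^ (r + 2) := by gcongr ?_ * _; exact three_mul_succ_mul_two_pow_le p
    _ = 4 * 3 ^ q := by rw [← hq, hp]; ring

end DegreeBound

section Palm

variable {n : ℕ} {a : ℕ → ℕ}

/-- The center `a_0` of a palm. -/
def hub : PalmVert n a := none

/-- The vertex at height `h`, i.e. at distance `h` from the hub, on leg `i`: the hub for `h = 0`,
and `a_{i+1,h}` otherwise. -/
def legVert (i : Fin n) (h : Fin (a (i + 1) + 1)) : PalmVert n a :=
  h.cases hub fun j => some ⟨i, j⟩

theorem legVert_of_eq_zero (i : Fin n) {h : Fin (a (i + 1) + 1)} (hh : (h : ℕ) = 0) :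
    (legVert i h : PalmVert n a) = hub := by
  obtain rfl : h = 0 := Fin.ext hh
  rfl

theorem eq_hub_or_exists_legVert (v : PalmVert n a) :
    v = hub ∨ ∃ (i : Fin n) (h : Fin (a (i + 1) + 1)), 0 < (h : ℕ) ∧ v = legVert i h := by
  rcases v with _ | ⟨i, j⟩
  · exact .inl rfl
  · exact .inr ⟨i, j.succ, j.val.succ_pos, rfl⟩

theorem palm_adj_legVert (i : Fin n) (j : Fin (a (i + 1))) :
    (Palm n a).Adj (legVert i j.castSucc) (legVert i j.succ) := by
  obtain ⟨_ | j, hj⟩ := j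
  · exact (fromRel_adj _ _ _).2 ⟨nofun, .inl rfl⟩
  · refine (fromRel_adj _ _ _).2 ⟨fun h => ?_, .inl ⟨rfl, rfl⟩⟩
    cases h

theorem exists_legVert_of_palm_adj {u v : PalmVert n a} (huv : (Palm n a).Adj u v) :
    ∃ (i : Fin n) (j : Fin (a (i + 1))),
      u = legVert i j.castSucc ∧ v = legVert i j.succ ∨
      v = legVert i j.castSucc ∧ u = legVert i j.succ := by
  have of_rel : ∀ {u v : PalmVert n a}, (match u, v with
      | none, some ⟨_, j⟩ => (j : ℕ) = 0
      | some ⟨i, j⟩, some ⟨i', j'⟩ => (i : ℕ) = (i' : ℕ) ∧ (j' : ℕ) = (j : ℕ) + 1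
      | _, _ => False) →
      ∃ (i : Fin n) (j : Fin (a (i + 1))), u = legVert i j.castSucc ∧ v = legVert i j.succ := by
    intro u v h
    rcases u with _ | ⟨i, j⟩ <;> rcases v with _ | ⟨i', j'⟩
    · exact h.elim
    · exact ⟨i', j', (legVert_of_eq_zero i' h).symm, rfl⟩
    · exact h.elim
    · obtain ⟨hi, hj⟩ := h
      obtain rfl := Fin.ext hi
      have hcast : j'.castSucc = j.succ := Fin.ext hj
      exact ⟨i, j', by rw [hcast]; rfl, rfl⟩
  rcases ((fromRel_adj _ _ _).1 huv).2 with h | h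
  · obtain ⟨i, j, h⟩ := of_rel h
    exact ⟨i, j, .inl h⟩
  · obtain ⟨i, j, h⟩ := of_rel h
    exact ⟨i, j, .inr h⟩

theorem exists_walk_legVert (i : Fin n) {g h : Fin (a (i + 1) + 1)} (hgh : g ≤ h) :
    ∃ p : (Palm n a).Walk (legVert i g) (legVert i h), p.length = (h : ℕ) - g := by
  induction h using Fin.induction with
  | zero =>
    obtain rfl : g = 0 := Fin.le_zero_iff.1 hgh
    exact ⟨.nil, rfl⟩
  | succ j ih =>
    rcases hgh.eq_or_lt with rfl | hlt
    · exact ⟨.nil, (Nat.sub_self _).symm⟩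
    · have hle : g ≤ j.castSucc := Fin.le_castSucc_iff.2 hlt
      obtain ⟨p, hp⟩ := ih hle
      refine ⟨p.concat (palm_adj_legVert i j), ?_⟩
      rw [Walk.length_concat, hp, Fin.val_succ, Fin.val_castSucc]
      exact (Nat.sub_add_comm hle).symm

theorem palm_connected : (Palm n a).Connected := by
  have hub_reachable : ∀ v, (Palm n a).Reachable hub v := by
    intro v
    obtain rfl | ⟨i, h, -, rfl⟩ := eq_hub_or_exists_legVert v
    · exact .rfl
    · obtain ⟨p, -⟩ := exists_walk_legVert i (Fin.zero_le h)
      exact ⟨p⟩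
  exact (connected_iff_exists_forall_reachable _).2 ⟨hub, hub_reachable⟩

theorem palm_dist_legVert_le (i : Fin n) {g h : Fin (a (i + 1) + 1)} (hgh : g ≤ h) :
    (Palm n a).dist (legVert i g) (legVert i h) ≤ (h : ℕ) - g := by
  obtain ⟨p, hp⟩ := exists_walk_legVert i hgh
  exact hp ▸ dist_le p

/-- The height of a vertex, counted negatively off leg `i`. The absolute values of its increments
bound distances from below, and for two vertices at most one of which lies off leg `i` this bound
is attained. -/
def signedHeight (i : Fin n) : PalmVert n a → ℤ
  | none => 0
  | some ⟨i', j⟩ => if i' = i then j + 1 else -(j + 1)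

theorem signedHeight_legVert_self (i : Fin n) (h : Fin (a (i + 1) + 1)) :
    signedHeight i (legVert i h) = h :=
  h.cases rfl fun _ => if_pos rfl

theorem signedHeight_legVert_of_ne {i i' : Fin n} (hi : i' ≠ i) (h : Fin (a (i' + 1) + 1)) :
    signedHeight i (legVert i' h) = -h :=
  h.cases rfl fun _ => if_neg hi

theorem signedHeight_le_of_palm_adj (i : Fin n) (u v : PalmVert n a) (huv : (Palm n a).Adj u v) :
    signedHeight i v ≤ signedHeight i u + 1 := by
  obtain ⟨i', j, ⟨rfl, rfl⟩ | ⟨rfl, rfl⟩⟩ := exists_legVert_of_palm_adj huv <;>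
  · by_cases hi : i' = i
    · subst hi
      rw [signedHeight_legVert_self, signedHeight_legVert_self, Fin.val_succ, Fin.val_castSucc]
      omega
    · rw [signedHeight_legVert_of_ne hi, signedHeight_legVert_of_ne hi, Fin.val_succ,
        Fin.val_castSucc]
      omega

/-- The right-hand side is `|g - h|`, since one of the two truncated differences vanishes. -/
theorem palm_dist_legVert_self (i : Fin n) (g h : Fin (a (i + 1) + 1)) :
    (Palm n a).dist (legVert i g) (legVert i h) = ((g : ℕ) - h) + (h - g) := by
  wlog hgh : g ≤ h generalizing g h
  · rw [dist_comm, this h g (le_of_not_ge hgh), add_comm]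
  have hle := palm_dist_legVert_le i hgh
  have hge := sub_le_dist_of_forall_adj palm_connected (signedHeight_le_of_palm_adj i)
    (legVert i g) (legVert i h)
  rw [signedHeight_legVert_self, signedHeight_legVert_self] at hge
  rw [Fin.le_def] at hgh
  omega

theorem palm_dist_hub_legVert (i : Fin n) (h : Fin (a (i + 1) + 1)) :
    (Palm n a).dist hub (legVert i h) = h := by
  rw [← legVert_of_eq_zero i (h := 0) rfl, palm_dist_legVert_self]
  simp

theorem palm_dist_legVert_of_ne {i i' : Fin n} (hi : i' ≠ i) (h : Fin (a (i + 1) + 1))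
    (h' : Fin (a (i' + 1) + 1)) :
    (Palm n a).dist (legVert i h) (legVert i' h') = (h : ℕ) + h' := by
  have hle := palm_connected.dist_triangle (u := legVert i h) (v := hub) (w := legVert i' h')
  have hge := sub_le_dist_of_forall_adj palm_connected (signedHeight_le_of_palm_adj i)
    (legVert i' h') (legVert i h)
  rw [dist_comm (v := hub), palm_dist_hub_legVert, palm_dist_hub_legVert] at hle
  rw [signedHeight_legVert_self, signedHeight_legVert_of_ne hi, dist_comm] at hge
  omega

variable {S : Set (PalmVert n a)}

theorem distToSet_legVert_of_notMem (hS : S.Nonempty) {i : Fin n}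
    (hi : ∀ g : Fin (a (i + 1) + 1), 0 < (g : ℕ) → legVert i g ∉ S) (h : Fin (a (i + 1) + 1)) :
    distToSet (Palm n a) (legVert i h) S = h + distToSet (Palm n a) hub S := by
  apply le_antisymm
  · have hle := distToSet_le_dist_add_distToSet palm_connected (legVert i h) hub S
    rwa [dist_comm, palm_dist_hub_legVert] at hle
  · obtain ⟨w, hw, hd⟩ := exists_dist_eq_distToSet (G := Palm n a) hS (legVert i h)
    have hhub := distToSet_le_dist (G := Palm n a) hub hw
    rw [← hd]
    obtain rfl | ⟨i', h', hpos, rfl⟩ := eq_hub_or_exists_legVert w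
    · rw [dist_self] at hhub
      rw [dist_comm, palm_dist_hub_legVert]
      omega
    · have hne : i' ≠ i := by
        rintro rfl
        exact hi h' hpos hw
      rw [palm_dist_hub_legVert] at hhub
      rw [palm_dist_legVert_of_ne hne]
      omega

/-- `g ≤ 2 * h + h'` ensures that `legVert i g` is at least as close to `legVert i h` as
`legVert i' h'` is. -/
theorem exists_distToSet_legVert_eq {i : Fin n} {g h : Fin (a (i + 1) + 1)}
    (hg : legVert i g ∈ S)
    (hother : ∀ i' ≠ i, ∀ h' : Fin (a (i' + 1) + 1), legVert i' h' ∈ S →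
      (g : ℕ) ≤ 2 * h + h') :
    ∃ g' : Fin (a (i + 1) + 1), legVert i g' ∈ S ∧
      distToSet (Palm n a) (legVert i h) S = ((h : ℕ) - g') + (g' - h) := by
  have hle := distToSet_le_dist (G := Palm n a) (legVert i h) hg
  rw [palm_dist_legVert_self] at hle
  obtain ⟨w, hw, hd⟩ := exists_dist_eq_distToSet (G := Palm n a) ⟨_, hg⟩ (legVert i h)
  rw [← hd] at hle ⊢
  obtain rfl | ⟨i', h', hpos, rfl⟩ := eq_hub_or_exists_legVert w
  · exact ⟨0, hw, palm_dist_legVert_self i h 0⟩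
  · by_cases hi : i' = i
    · subst hi
      exact ⟨h', hw, palm_dist_legVert_self i' h h'⟩
    · have := hother i' hi h' hw
      rw [palm_dist_legVert_of_ne hi] at hle ⊢
      exact ⟨g, hg, by omega⟩

end Palm

section Coloring

/-- The background of a leg: a pair of distinct colors, the first for the odd heights and the
second for the positive even heights. The first color is not the color `0` of the hub. -/
abbrev Background : Type := {p : Fin 3 × Fin 3 // p.1 ≠ 0 ∧ p.2 ≠ p.1}

theorem card_background : Fintype.card Background = 4 := by
  decide

/-- The background color at height `h`, where height `0` is the hub. -/
def Background.color (b : Background) (h : ℕ) : Fin 3 :=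
  if h = 0 then 0 else if h % 2 = 1 then b.val.1 else b.val.2

theorem Background.color_eq_fst_iff (b : Background) (h : ℕ) :
    b.color h = b.val.1 ↔ h % 2 = 1 := by
  unfold Background.color
  split_ifs with h0 h1
  · simp [h0, b.2.1.symm]
  · simp [h1]
  · simp [h1, b.2.2]

theorem Background.color_succ_ne (b : Background) (h : ℕ) : b.color (h + 1) ≠ b.color h := by
  intro heq
  have h1 := b.color_eq_fst_iff h
  rw [← heq, b.color_eq_fst_iff] at h1
  omega

theorem Background.color_mem (b : Background) {h : ℕ} (hh : 0 < h) :
    b.color h = b.val.1 ∨ b.color h = b.val.2 := by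
  unfold Background.color
  split_ifs
  · omega
  · exact .inl rfl
  · exact .inr rfl

theorem Background.exists_absent (b : Background) : ∃ x, x ≠ b.val.1 ∧ x ≠ b.val.2 := by
  have : ∀ y z : Fin 3, ∃ x, x ≠ y ∧ x ≠ z := by decide
  exact this _ _

theorem Background.ext_of_absent {b b' : Background} {x : Fin 3} (h2 : x ≠ b.val.2)
    (h1' : x ≠ b'.val.1) (h2' : x ≠ b'.val.2) (hfst : b.val.1 = b'.val.1) : b = b' := by
  have hb := b.2.2
  have hb' := b'.2.2
  exact Subtype.ext (Prod.ext hfst (by omega))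

variable {m : ℕ}

/-- The color at height `h` of a leg with background `b` and marks `f`: the background color
`Sum.inr (b.color h)`, unless `h` is the place `2 * x + 3 + f x` of an extra color `Sum.inl x`.
The value `f x = 2` means that the extra color `x` does not occur on the leg. -/
noncomputable def legColor (b : Background) (f : Fin m → Fin 3) (h : ℕ) : Fin m ⊕ Fin 3 :=
  if hx : ∃ x, f x ≠ 2 ∧ h = 2 * x + 3 + f x then .inl hx.choose else .inr (b.color h)

section LegColor

variable {b : Background} {f : Fin m → Fin 3} {h : ℕ}

theorem legColor_eq_inl_iff {x : Fin m} :
    legColor b f h = .inl x ↔ f x ≠ 2 ∧ h = 2 * x + 3 + f x := by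
  unfold legColor
  split_ifs with hx
  · have hspec := hx.choose_spec
    rw [Sum.inl.injEq]
    constructor
    · rintro rfl
      exact hspec
    · rintro ⟨hf, hh⟩
      exact Fin.ext (by omega)
  · exact ⟨nofun, fun h => absurd ⟨x, h⟩ hx⟩

theorem color_eq_of_legColor_eq_inr {y : Fin 3} (hy : legColor b f h = .inr y) :
    b.color h = y := by
  unfold legColor at hy
  split_ifs at hy
  exact Sum.inr.inj hy

theorem legColor_of_lt_three (hh : h < 3) : legColor b f h = .inr (b.color h) := by
  unfold legColor
  split_ifs with hx
  · obtain ⟨x, -, hx⟩ := hx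
    omega
  · rfl

theorem legColor_succ_ne (b : Background) (f : Fin m → Fin 3) (h : ℕ) :
    legColor b f (h + 1) ≠ legColor b f h := by
  intro heq
  rcases hc : legColor b f h with x | y
  · have h1 := legColor_eq_inl_iff.1 hc
    have h2 := legColor_eq_inl_iff.1 (heq.trans hc)
    omega
  · exact b.color_succ_ne h ((color_eq_of_legColor_eq_inr (heq.trans hc)).trans
      (color_eq_of_legColor_eq_inr hc).symm)

end LegColor

variable {n : ℕ} {a : ℕ → ℕ}

/-- The coloring of a palm whose leg `i` is colored according to the background `b i` and the
marks `f i`. -/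
noncomputable def palmColor (b : Fin n → Background) (f : Fin n → Fin m → Fin 3) :
    PalmVert n a → Fin m ⊕ Fin 3
  | none => .inr 0
  | some ⟨i, j⟩ => legColor (b i) (f i) (j + 1)

/-- The vertices of color `x` in the coloring `palmColor b f`. -/
abbrev colorClass (b : Fin n → Background) (f : Fin n → Fin m → Fin 3) (x : Fin m ⊕ Fin 3) :
    Set (PalmVert n a) :=
  palmColor b f ⁻¹' {x}

/-- The distance from `v` to the color class `x` of the coloring `palmColor b f`. -/
noncomputable abbrev colorDist (b : Fin n → Background) (f : Fin n → Fin m → Fin 3)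
    (v : PalmVert n a) (x : Fin m ⊕ Fin 3) : ℕ :=
  distToSet (Palm n a) v (colorClass b f x)

variable {b : Fin n → Background} {f : Fin n → Fin m → Fin 3}

theorem hub_mem_colorClass_iff {x : Fin m ⊕ Fin 3} :
    (hub : PalmVert n a) ∈ colorClass b f x ↔ x = .inr 0 :=
  eq_comm

theorem palmColor_legVert (i : Fin n) (h : Fin (a (i + 1) + 1)) :
    palmColor b f (legVert i h) = legColor (b i) (f i) h := by
  refine h.cases ?_ fun _ => rfl
  exact (legColor_of_lt_three (b := b i) (f := f i) three_pos).symm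

theorem legVert_mem_colorClass_iff {i : Fin n} {h : Fin (a (i + 1) + 1)} {x : Fin m ⊕ Fin 3} :
    legVert i h ∈ colorClass b f x ↔ legColor (b i) (f i) h = x :=
  Eq.congr_left (palmColor_legVert i h)

theorem palmColor_ne_of_adj {u v : PalmVert n a} (huv : (Palm n a).Adj u v) :
    palmColor b f u ≠ palmColor b f v := by
  obtain ⟨i, j, ⟨rfl, rfl⟩ | ⟨rfl, rfl⟩⟩ := exists_legVert_of_palm_adj huv <;>
    rw [palmColor_legVert, palmColor_legVert, Fin.val_castSucc, Fin.val_succ]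
  · exact (legColor_succ_ne _ _ _).symm
  · exact legColor_succ_ne _ _ _

section BackgroundColors

variable {i : Fin n} {x : Fin 3}

theorem exists_legVert_mem_colorClass_inr (ha : 2 ≤ a (i + 1))
    (hx : x = (b i).val.1 ∨ x = (b i).val.2) :
    ∃ g : Fin (a (i + 1) + 1), 0 < (g : ℕ) ∧ (g : ℕ) ≤ 2 ∧
      legVert i g ∈ colorClass b f (.inr x) := by
  simp only [legVert_mem_colorClass_iff]
  rcases hx with rfl | rfl
  · exact ⟨⟨1, by omega⟩, one_pos, one_le_two, legColor_of_lt_three Nat.one_lt_ofNat⟩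
  · exact ⟨⟨2, by omega⟩, two_pos, le_rfl, legColor_of_lt_three (Nat.lt_succ_self 2)⟩

theorem colorClass_inr_nonempty (ha : 2 ≤ a (i + 1)) (hi : (b i).val.2 ≠ 0) (x : Fin 3) :
    (colorClass b f (.inr x) : Set (PalmVert n a)).Nonempty := by
  by_cases hx : x = 0
  · exact ⟨hub, hub_mem_colorClass_iff.2 (congrArg _ hx)⟩
  · have h1 := (b i).2.1
    have h2 := (b i).2.2
    obtain ⟨g, -, -, hg⟩ := exists_legVert_mem_colorClass_inr (b := b) (f := f) (x := x) ha
      (by omega)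
    exact ⟨_, hg⟩

theorem colorDist_inr_le (ha : 2 ≤ a (i + 1)) (hx : x = (b i).val.1 ∨ x = (b i).val.2)
    {h : Fin (a (i + 1) + 1)} (hh : 0 < (h : ℕ)) :
    colorDist b f (legVert i h) (.inr x) ≤ max ((h : ℕ) - 1) 1 := by
  obtain ⟨g, hg0, hg2, hg⟩ := exists_legVert_mem_colorClass_inr (f := f) ha hx
  calc colorDist b f (legVert i h) (.inr x)
      ≤ (Palm n a).dist (legVert i h) (legVert i g) := distToSet_le_dist _ hg
    _ = ((h : ℕ) - g) + (g - h) := palm_dist_legVert_self i h g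
    _ ≤ max ((h : ℕ) - 1) 1 := by omega

theorem height_add_colorDist_inr_mod_two (ha : 2 ≤ a (i + 1))
    (hx : x = (b i).val.1 ∨ x = (b i).val.2) {h : Fin (a (i + 1) + 1)} (hh : 0 < (h : ℕ)) :
    ((h : ℕ) + colorDist b f (legVert i h) (.inr x)) % 2 = 1 ↔ x = (b i).val.1 := by
  obtain ⟨g, -, hg2, hg⟩ := exists_legVert_mem_colorClass_inr (f := f) ha hx
  obtain ⟨g', hg', hd⟩ := exists_distToSet_legVert_eq (h := h) hg fun i' _ h' _ => by omega
  rw [colorDist, hd, ← color_eq_of_legColor_eq_inr (legVert_mem_colorClass_iff.1 hg'),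
    Background.color_eq_fst_iff]
  omega

theorem colorDist_inr_of_absent (hne : (colorClass b f (.inr x) : Set (PalmVert n a)).Nonempty)
    (h1 : x ≠ (b i).val.1) (h2 : x ≠ (b i).val.2) (h : Fin (a (i + 1) + 1)) :
    colorDist b f (legVert i h) (.inr x) = h + colorDist b f (hub : PalmVert n a) (.inr x) := by
  refine distToSet_legVert_of_notMem hne (fun g hg hgx => ?_) h
  have hcolor := color_eq_of_legColor_eq_inr (legVert_mem_colorClass_iff.1 hgx)
  rcases (b i).color_mem hg with h | h
  · exact h1 (hcolor.symm.trans h)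
  · exact h2 (hcolor.symm.trans h)

theorem colorDist_hub_inr_eq_zero_iff
    (hne : (colorClass b f (.inr x) : Set (PalmVert n a)).Nonempty) :
    colorDist b f (hub : PalmVert n a) (.inr x) = 0 ↔ x = 0 := by
  rw [colorDist, distToSet_eq_zero_iff palm_connected hne, hub_mem_colorClass_iff, Sum.inr.injEq]

end BackgroundColors

section ExtraColors

variable {i i' : Fin n} {x : Fin m} {h : Fin (a (i + 1) + 1)}

theorem legVert_mem_colorClass_inl_iff :
    legVert i h ∈ colorClass b f (.inl x) ↔ f i x ≠ 2 ∧ (h : ℕ) = 2 * x + 3 + f i x :=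
  legVert_mem_colorClass_iff.trans legColor_eq_inl_iff

theorem exists_legVert_mem_colorClass_inl (ha : 2 * m + 2 ≤ a (i + 1)) (hf : f i x ≠ 2) :
    ∃ g : Fin (a (i + 1) + 1), legVert i g ∈ colorClass b f (.inl x) :=
  ⟨⟨2 * x + 3 + f i x, by omega⟩, legVert_mem_colorClass_inl_iff.2 ⟨hf, rfl⟩⟩

theorem colorDist_inl_of_ne_two (ha : 2 * m + 2 ≤ a (i + 1)) (hf : f i x ≠ 2) (hh : 0 < (h : ℕ)) :
    colorDist b f (legVert i h) (.inl x) =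
      ((h : ℕ) - (2 * x + 3 + f i x)) + (2 * x + 3 + f i x - h) := by
  obtain ⟨g, hg⟩ := exists_legVert_mem_colorClass_inl (b := b) ha hf
  obtain ⟨g', hg', hd⟩ := exists_distToSet_legVert_eq (h := h) hg fun i' _ h' hh' => by
    have := legVert_mem_colorClass_inl_iff.1 hg
    have := legVert_mem_colorClass_inl_iff.1 hh'
    omega
  rw [colorDist, hd, (legVert_mem_colorClass_inl_iff.1 hg').2]

theorem le_colorDist_inl_of_eq_two
    (hne : (colorClass b f (.inl x) : Set (PalmVert n a)).Nonempty) (hf : f i x = 2) :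
    (h : ℕ) + (2 * x + 3) ≤ colorDist b f (legVert i h) (.inl x) := by
  rw [colorDist, distToSet_legVert_of_notMem hne fun g _ hg =>
    (legVert_mem_colorClass_inl_iff.1 hg).1 hf]
  obtain ⟨w, hw, hd⟩ := exists_dist_eq_distToSet (G := Palm n a) hne hub
  rw [← hd]
  obtain rfl | ⟨i', g, -, rfl⟩ := eq_hub_or_exists_legVert w
  · exact absurd (hub_mem_colorClass_iff.1 hw) nofun
  · have := legVert_mem_colorClass_inl_iff.1 hw
    rw [palm_dist_hub_legVert]
    omega

theorem marks_eq_of_colorDist_eq (ha : ∀ i : Fin n, 2 * m + 2 ≤ a (i + 1))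
    {h' : Fin (a (i' + 1) + 1)} (hh : 0 < (h : ℕ)) (hhh' : (h : ℕ) = h')
    (heq : colorDist b f (legVert i h) (.inl x) = colorDist b f (legVert i' h') (.inl x)) :
    f i x = f i' x := by
  by_cases hi : f i x = 2 <;> by_cases hi' : f i' x = 2
  · rw [hi, hi']
  · obtain ⟨g, hg⟩ := exists_legVert_mem_colorClass_inl (b := b) (ha i') hi'
    have hle := le_colorDist_inl_of_eq_two (h := h) ⟨_, hg⟩ hi
    rw [heq, colorDist_inl_of_ne_two (ha i') hi' (hhh' ▸ hh)] at hle
    omega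
  · obtain ⟨g, hg⟩ := exists_legVert_mem_colorClass_inl (b := b) (ha i) hi
    have hle := le_colorDist_inl_of_eq_two (h := h') ⟨_, hg⟩ hi'
    rw [← heq, colorDist_inl_of_ne_two (ha i) hi hh] at hle
    omega
  · rw [colorDist_inl_of_ne_two (ha i) hi hh,
      colorDist_inl_of_ne_two (ha i') hi' (hhh' ▸ hh)] at heq
    omega

end ExtraColors

theorem height_eq_of_colorDist_eq
    (hne : ∀ x, (colorClass b f (.inr x) : Set (PalmVert n a)).Nonempty)
    {i : Fin n} {h h' : Fin (a (i + 1) + 1)}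
    (heq : ∀ x, colorDist b f (legVert i h) (.inr x) = colorDist b f (legVert i h') (.inr x)) :
    h = h' := by
  obtain ⟨x, hx1, hx2⟩ := (b i).exists_absent
  have hx := heq x
  rw [colorDist_inr_of_absent (hne x) hx1 hx2, colorDist_inr_of_absent (hne x) hx1 hx2] at hx
  exact Fin.ext (Nat.add_right_cancel hx)

theorem height_eq_and_background_eq_of_colorDist_eq
    (hne : ∀ x, (colorClass b f (.inr x) : Set (PalmVert n a)).Nonempty)
    (ha : ∀ i : Fin n, 2 ≤ a (i + 1)) {i i' : Fin n} {h : Fin (a (i + 1) + 1)}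
    {h' : Fin (a (i' + 1) + 1)} (hh : 0 < (h : ℕ)) (hh' : 0 < (h' : ℕ))
    (heq : ∀ x, colorDist b f (legVert i h) (.inr x) = colorDist b f (legVert i' h') (.inr x)) :
    (h : ℕ) = h' ∧ b i = b i' := by
  obtain ⟨x, hx1, hx2⟩ := (b i).exists_absent
  obtain ⟨x', hx1', hx2'⟩ := (b i').exists_absent
  have hd := colorDist_inr_of_absent (hne x) hx1 hx2 h
  have hd' := colorDist_inr_of_absent (hne x') hx1' hx2' h'
  have hb := (b i).2.2
  have hb' := (b i').2.2
  rcases eq_or_ne x x' with rfl | hxx'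
  · have hheight : (h : ℕ) = h' := by
      have := heq x
      omega
    have hfst : (b i).val.1 = (b i').val.1 := by
      rw [← height_add_colorDist_inr_mod_two (f := f) (ha i') (by omega) hh', ← hheight, ← heq,
        height_add_colorDist_inr_mod_two (ha i) (.inl rfl) hh]
    exact ⟨hheight, Background.ext_of_absent hx2 hx1' hx2' hfst⟩
  · -- Both vertices are at height 1 and both absent colors are that of the hub: otherwise one
    -- vertex is farther from its absent color than the other, on whose leg this color occurs.
    exfalso
    have hle := colorDist_inr_le (b := b) (f := f) (x := x) (ha i') (by omega) hh'
    have hle' := colorDist_inr_le (b := b) (f := f) (x := x') (ha i) (by omega) hh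
    rw [← heq, hd] at hle
    rw [heq, hd'] at hle'
    have hx : x = 0 := (colorDist_hub_inr_eq_zero_iff (hne x)).1 (by omega)
    have hx' : x' = 0 := (colorDist_hub_inr_eq_zero_iff (hne x')).1 (by omega)
    exact hxx' (hx.trans hx'.symm)

theorem eq_of_colorDist_eq
    (hne : ∀ x, (colorClass b f (.inr x) : Set (PalmVert n a)).Nonempty)
    (ha : ∀ i : Fin n, 2 * m + 2 ≤ a (i + 1))
    (hinj : Function.Injective fun i => (b i, f i)) {u v : PalmVert n a}
    (heq : ∀ x, colorDist b f u x = colorDist b f v x) : u = v := by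
  obtain rfl | ⟨i, h, hh, rfl⟩ := eq_hub_or_exists_legVert u <;>
    obtain rfl | ⟨i', h', hh', rfl⟩ := eq_hub_or_exists_legVert v
  · rfl
  · rw [← legVert_of_eq_zero i' (h := 0) rfl] at heq ⊢
    rw [height_eq_of_colorDist_eq hne fun x => heq (.inr x)]
  · rw [← legVert_of_eq_zero i (h := 0) rfl] at heq ⊢
    rw [height_eq_of_colorDist_eq hne fun x => heq (.inr x)]
  · obtain ⟨hheight, hback⟩ := height_eq_and_background_eq_of_colorDist_eq hne
      (fun i => (Nat.le_add_left 2 (2 * m)).trans (ha i)) hh hh' fun x => heq (.inr x)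
    have hmarks : f i = f i' :=
      funext fun x => marks_eq_of_colorDist_eq ha hh hheight (heq (.inl x))
    obtain rfl := hinj (Prod.ext hback hmarks)
    rw [Fin.ext hheight]

theorem exists_injective_background_marks (hn : 0 < n) (hnm : n ≤ 4 * 3 ^ m) :
    ∃ (b : Fin n → Background) (f : Fin n → Fin m → Fin 3),
      (Function.Injective fun i => (b i, f i)) ∧ ∃ i, (b i).val.2 ≠ 0 := by
  let p : Background × (Fin m → Fin 3) := (⟨(1, 2), by decide⟩, 0)
  obtain ⟨s, hps, -, hs⟩ := Finset.exists_subsuperset_card_eq (n := n) (Finset.subset_univ {p})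
    hn (by simpa [card_background] using hnm)
  let e := (s.equivFinOfCardEq hs).symm
  refine ⟨fun i => (e i).val.1, fun i => (e i).val.2, Subtype.val_injective.comp e.injective,
    e.symm ⟨p, Finset.singleton_subset_iff.1 hps⟩, ?_⟩
  simp [p]

theorem exists_isLocatingColoring_palm (hn : 0 < n) (hnm : n ≤ 4 * 3 ^ m)
    (ha : ∀ i : Fin n, 2 * m + 2 ≤ a (i + 1)) :
    ∃ c : PalmVert n a → Fin (m + 3), IsLocatingColoring (Palm n a) c := by
  obtain ⟨b, f, hinj, i, hi⟩ := exists_injective_background_marks hn hnm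
  have hne := colorClass_inr_nonempty (f := f) ((Nat.le_add_left 2 (2 * m)).trans (ha i)) hi
  exact ⟨finSumFinEquiv ∘ palmColor b f, isLocatingColoring_equiv_comp _
    (fun _ _ => palmColor_ne_of_adj) fun _ _ => eq_of_colorDist_eq hne ha hinj⟩

end Coloring

section LocatingChromaticNumber

variable {n : ℕ} {a : ℕ → ℕ}

theorem mul_le_of_isLocatingColoring_palm (ha : ∀ i : Fin n, 0 < a (i + 1)) {q : ℕ}
    {c : PalmVert n a → Fin q} (hc : IsLocatingColoring (Palm n a) c) :
    27 * n ≤ 4 * 3 ^ q := by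
  let firstVert : Fin n ↪ PalmVert n a :=
    ⟨fun i => some ⟨i, 0, ha i⟩, fun i i' h => by cases h; rfl⟩
  have hadj : ∀ v ∈ Finset.univ.map firstVert, (Palm n a).Adj hub v := by
    intro v hv
    obtain ⟨i, -, rfl⟩ := Finset.mem_map.1 hv
    exact palm_adj_legVert i ⟨0, ha i⟩
  simpa using card_neighbors_le_of_isLocatingColoring palm_connected hc hadj

theorem ceil_logb_add_three_le_iff (hn : 0 < n) (q : ℕ) :
    ⌈Real.logb 3 ((n : ℝ) / 4)⌉ + 3 ≤ (q : ℤ) ↔ 27 * n ≤ 4 * 3 ^ q := by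
  have hpos : 0 < (n : ℝ) / 4 := by positivity
  calc ⌈Real.logb 3 ((n : ℝ) / 4)⌉ + 3 ≤ (q : ℤ)
      ↔ Real.logb 3 ((n : ℝ) / 4) ≤ (q : ℝ) - 3 := by
        rw [← le_sub_iff_add_le, Int.ceil_le]
        norm_cast
    _ ↔ (n : ℝ) / 4 ≤ 3 ^ q / 27 := by
        rw [Real.logb_le_iff_le_rpow (by norm_num) hpos, Real.rpow_sub three_pos, Real.rpow_natCast]
        norm_num
    _ ↔ 27 * n ≤ 4 * 3 ^ q := by
        rw [div_le_div_iff₀ (by norm_num) (by norm_num)]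
        norm_cast
        rw [mul_comm n, mul_comm _ 4]

theorem locatingChromaticNumber_regularPalm_long_general (hn : 2 ≤ n)
    (ha : ∀ i : Fin n, 2 * ⌈Real.logb 3 ((n : ℝ) / 4)⌉ + 2 ≤ (a (i + 1) : ℤ)) :
    (locatingChromaticNumber (Palm n a) : ℤ) = ⌈Real.logb 3 ((n : ℝ) / 4)⌉ + 3 := by
  have hceil := ceil_logb_add_three_le_iff (Nat.zero_lt_of_lt hn)
  have hnonneg : 0 ≤ ⌈Real.logb 3 ((n : ℝ) / 4)⌉ := by
    have := (hceil 2).not.2 (by omega)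
    omega
  obtain ⟨m, hm⟩ := Int.eq_ofNat_of_zero_le hnonneg
  rw [hm] at hceil ha ⊢
  have hleast : IsLeast {q | ∃ c : PalmVert n a → Fin q, IsLocatingColoring (Palm n a) c}
      (m + 3) := by
    constructor
    · have hnm : n ≤ 4 * 3 ^ m := by
        have := (hceil (m + 3)).1 le_rfl
        rw [pow_add] at this
        omega
      exact exists_isLocatingColoring_palm (by omega) hnm fun i => mod_cast ha i
    · rintro q ⟨c, hc⟩
      have hle := mul_le_of_isLocatingColoring_palm (fun i => by have := ha i; omega) hc
      exact mod_cast (hceil q).2 hle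
  exact mod_cast hleast.csInf_eq

end LocatingChromaticNumber

/-- For `n ≥ 3` and any integer `k ≥ 2⌈log_3(n/4)⌉ + 4`, the regular palm
`S_n(k)` satisfies `χ_L(S_n(k)) = ⌈log_3(n/4)⌉ + 3`. -/
theorem locatingChromaticNumber_regularPalm_long (n : ℕ) (hn : 3 ≤ n) (k : ℕ)
    (hk : 2 * ⌈Real.logb 3 ((n : ℝ) / 4)⌉ + 4 ≤ (k : ℤ)) :
    (locatingChromaticNumber (Palm n (fun _ => k)) : ℤ) =
      ⌈Real.logb 3 ((n : ℝ) / 4)⌉ + 3 :=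
  locatingChromaticNumber_regularPalm_long_general (by omega) fun _ => by omega
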